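/- Assume the GO condition holds. Let λ ≠ μ, let p ⊆ ker(A − λ·id) and p' ⊆ ker(A − μ·id) be subspaces with [h, p] ⊆ p and [h, p'] ⊆ p'. Then [X, Y] ∈ p + p' for all X ∈ p and Y ∈ p' (i.e. [p, p'] ⊆ p + p'). -/

import Mathlib

/-
Setting: a finite-dimensional real Lie algebra `g` with an ad-invariant inner
product (encoded as a positive definite symmetric bilinear form `B`), a Lie
subalgebra `h`, the orthogonal complement `m = h^⊥`, and the metric
endomorphism `A : m → m` (encoded as a linear map of `g` preserving `m`) which
is symmetric, positive definite and `h`-equivariant on `m`.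
-/
/-- In a GO-space, brackets of `ad h`-invariant subspaces of distinct eigenspaces of `A` satisfy `[p, p′] ⊆ p + p′`. -/
theorem stmt_5
    {g : Type*} [LieRing g] [LieAlgebra ℝ g] [FiniteDimensional ℝ g]
    (B : g →ₗ[ℝ] g →ₗ[ℝ] ℝ)
    (hBsymm : ∀ X Y : g, B X Y = B Y X)
    (hBpos : ∀ X : g, X ≠ 0 → 0 < B X X)
    (hBinv : ∀ Z X Y : g, B ⁅Z, X⁆ Y + B X ⁅Z, Y⁆ = 0)
    (h : LieSubalgebra ℝ g)
    (m : Submodule ℝ g) (hm : ∀ X : g, X ∈ m ↔ ∀ H ∈ h, B X H = 0)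
    (A : g →ₗ[ℝ] g)
    (hAm : ∀ X ∈ m, A X ∈ m)
    (hAsymm : ∀ X ∈ m, ∀ Y ∈ m, B (A X) Y = B X (A Y))
    (hApos : ∀ X ∈ m, X ≠ 0 → 0 < B (A X) X)
    (hAequiv : ∀ H ∈ h, ∀ X ∈ m, A ⁅H, X⁆ = ⁅H, A X⁆)
    (hGO : ∀ X ∈ m, ∃ H ∈ h, ⁅H + X, A X⁆ ∈ h)
    (lam mu : ℝ) (hne : lam ≠ mu)
    (p p' : Submodule ℝ g) (hpm : p ≤ m) (hp'm : p' ≤ m)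
    (hpe : ∀ X ∈ p, A X = lam • X) (hp'e : ∀ Y ∈ p', A Y = mu • Y)
    (hph : ∀ H ∈ h, ∀ X ∈ p, ⁅H, X⁆ ∈ p)
    (hp'h : ∀ H ∈ h, ∀ Y ∈ p', ⁅H, Y⁆ ∈ p') :
    ∀ X ∈ p, ∀ Y ∈ p', ⁅X, Y⁆ ∈ p ⊔ p' := by
  intro X hX Y hY
  have horth : ∀ U ∈ p, ∀ V ∈ p', B V U = 0 := by
    intro U hU V hV
    have e := hAsymm U (hpm hU) V (hp'm hV)
    rw [hpe U hU, hp'e V hV] at e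
    simp only [map_smul, LinearMap.smul_apply, smul_eq_mul] at e
    rw [hBsymm V U]
    have e' : (lam - mu) * B U V = 0 := by linarith
    exact (mul_eq_zero.mp e').resolve_left (sub_ne_zero.mpr hne)
  have hXYm : ⁅X, Y⁆ ∈ m := by
    rw [hm]
    intro K hK
    have e := hBinv X Y K
    rw [← lie_skew X K, map_neg, horth _ (hph K hK X hX) Y hY] at e
    simpa using e
  obtain ⟨H, hH, hK⟩ := hGO (X + Y) (m.add_mem (hpm hX) (hp'm hY))
  have hHX := hph H hH X hX
  have hHY := hp'h H hH Y hY
  have hexp : ⁅H + (X + Y), A (X + Y)⁆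
      = lam • ⁅H, X⁆ + mu • ⁅H, Y⁆ + (mu - lam) • ⁅X, Y⁆ := by
    rw [map_add, hpe X hX, hp'e Y hY]
    simp only [add_lie, lie_add, lie_smul, lie_self]
    rw [← lie_skew X Y]
    module
  have hKm : ⁅H + (X + Y), A (X + Y)⁆ ∈ m := by
    rw [hexp]
    exact m.add_mem (m.add_mem (m.smul_mem _ (hpm hHX)) (m.smul_mem _ (hp'm hHY)))
      (m.smul_mem _ hXYm)
  have hzero : ⁅H + (X + Y), A (X + Y)⁆ = 0 := by
    by_contra hK0
    exact (hBpos _ hK0).ne' ((hm _).mp hKm _ hK)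
  rw [hexp] at hzero
  have hmem : (mu - lam) • ⁅X, Y⁆ ∈ p ⊔ p' := by
    rw [eq_neg_of_add_eq_zero_right hzero]
    exact neg_mem (Submodule.add_mem_sup (p.smul_mem _ hHX) (p'.smul_mem _ hHY))
  exact ((p ⊔ p').smul_mem_iff (sub_ne_zero.mpr hne.symm)).mp hmem
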